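/- (Taylor expansion of the phase) With the zero-drift mostly symmetric setup, the function θ ↦ log S̄(e^{iθ_1},…,e^{iθ_d}) (principal branch) satisfies, as θ → 0 in ℝ^d, log S̄(e^{iθ}) = log S(1) − Σ_{j=1}^d (b_j / S(1)) θ_j^2 + O((|θ_1| + ··· + |θ_d|)^3). -/

import Mathlib

open Finset Filter MeasureTheory
open scoped Classical Real

noncomputable section

/-- Total weight of walks of length `n` with steps in `S` (weighted by `w`),
starting at the origin and never leaving `ℕ^d`. -/
def walkWeight (d : ℕ) (S : Finset (Fin d → ℤ)) (w : (Fin d → ℤ) → ℝ) (n : ℕ) : ℝ :=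
  ∑ f : Fin n → {i // i ∈ S},
    if ∀ m : ℕ, m ≤ n → ∀ j : Fin d,
        0 ≤ ∑ k ∈ Finset.univ.filter (fun k : Fin n => (k : ℕ) < m), ((f k : Fin d → ℤ) j)
    then ∏ k : Fin n, w (f k) else 0

/-- The step set `S` (with weights `w`) is symmetric over the `k`-th coordinate axis. -/
def SymmetricAxis (d : ℕ) (S : Finset (Fin d → ℤ)) (w : (Fin d → ℤ) → ℝ) (k : Fin d) : Prop :=
  ∀ i ∈ S, Function.update i k (-(i k)) ∈ S ∧ w (Function.update i k (-(i k))) = w i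

namespace ZeroDrift

variable (d : ℕ) (S : Finset (Fin (d + 1) → ℤ)) (w : (Fin (d + 1) → ℤ) → ℝ)

/-- `S(1)`, the total weight of the step set. -/
def S1 : ℝ := ∑ i ∈ S, w i

/-- `A(ẑ)`: the Laurent polynomial collecting steps with last coordinate `-1`. -/
def AC (z : Fin (d + 1) → ℂ) : ℂ :=
  ∑ i ∈ S.filter fun i => i (Fin.last d) = -1,
    (w i : ℂ) * ∏ j : Fin d, z (Fin.castSucc j) ^ (i (Fin.castSucc j))

/-- `B(ẑ)`: the Laurent polynomial collecting steps with last coordinate `1`. -/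
def BC (z : Fin (d + 1) → ℂ) : ℂ :=
  ∑ i ∈ S.filter fun i => i (Fin.last d) = 1,
    (w i : ℂ) * ∏ j : Fin d, z (Fin.castSucc j) ^ (i (Fin.castSucc j))

/-- `Q(ẑ)`: the Laurent polynomial collecting steps with last coordinate `0`. -/
def QC (z : Fin (d + 1) → ℂ) : ℂ :=
  ∑ i ∈ S.filter fun i => i (Fin.last d) = 0,
    (w i : ℂ) * ∏ j : Fin d, z (Fin.castSucc j) ^ (i (Fin.castSucc j))

/-- The characteristic Laurent polynomial `S(z)` evaluated at `z : ℂ^{d+1}`. -/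
def SC (z : Fin (d + 1) → ℂ) : ℂ :=
  ∑ i ∈ S, (w i : ℂ) * ∏ j : Fin (d + 1), z j ^ (i j)

/-- `S̄(z) = S(z_1,…,z_{d},1/z_{d+1})` evaluated at `z : ℂ^{d+1}`. -/
def SbarC (z : Fin (d + 1) → ℂ) : ℂ :=
  ∑ i ∈ S, (w i : ℂ) *
    (∏ j : Fin d, z (Fin.castSucc j) ^ (i (Fin.castSucc j))) *
    z (Fin.last d) ^ (-(i (Fin.last d)))

/-- The numerator `G(z,t)` of the diagonal representation. -/
def GC (z : Fin (d + 1) → ℂ) (t : ℂ) : ℂ :=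
  (∏ j : Fin d, (1 + z (Fin.castSucc j))) *
    (1 - t * (∏ j, z j) * (QC d S w z + 2 * z (Fin.last d) * AC d S w z))

/-- The denominator `H(z,t) = H_1 H_2 H_3` of the diagonal representation. -/
def HC (z : Fin (d + 1) → ℂ) (t : ℂ) : ℂ :=
  (1 - z (Fin.last d)) * (1 - t * (∏ j, z j) * SbarC d S w z) *
    (1 - t * (∏ j, z j) * (QC d S w z + z (Fin.last d) * AC d S w z))

/-- The point of `ℂ^{d+1}` with coordinates `i^{m_j}` encoded by `m : Fin (d+1) → Fin 4`. -/
def wOf (m : Fin (d + 1) → Fin 4) : Fin (d + 1) → ℂ :=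
  fun j => Complex.I ^ (m j : ℕ)

/-- The (indices of the) finite set `Γ` of possible contributing points: `w_j ∈ {±1}` for
`j ≤ d`, `w_{d+1} ∈ {±1,±i}`, and `|1/(w_1⋯w_{d+1} S(w))| = 1/S(1)`. -/
def GammaIdx : Finset (Fin (d + 1) → Fin 4) :=
  Finset.univ.filter fun m =>
    (∀ j : Fin d, m (Fin.castSucc j) = 0 ∨ m (Fin.castSucc j) = 2) ∧
    ‖(1 / ((∏ j, wOf d m j) * SC d S w (wOf d m)) : ℂ)‖ = 1 / S1 d S w

/-- The argument (angle) of the point encoded by `m` in coordinate `j`. -/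
def argOf (m : Fin (d + 1) → Fin 4) (j : Fin (d + 1)) : ℝ := (m j : ℕ) * π / 2

/-- The box of angles parametrizing the product of arcs `N_w` for `w = wOf m`. -/
def box (m : Fin (d + 1) → Fin 4) (δ : ℝ) : Set (Fin (d + 1) → ℝ) :=
  Set.univ.pi fun j => Set.Ioo (argOf d m j - δ) (argOf d m j + δ)

/-- The parametrization of the torus `|z_j| = 1` (`j ≤ d`), `|z_{d+1}| = 1 - ε`. -/
def zOf (ε : ℝ) (θ : Fin (d + 1) → ℝ) : Fin (d + 1) → ℂ :=
  fun j => (if j = Fin.last d then (1 - ε : ℂ) else 1) * Complex.exp (Complex.I * θ j)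

/-- Angles parametrizing `N = ⋃_{w ∈ Γ} N_w`. -/
def Nparam (δ : ℝ) : Set (Fin (d + 1) → ℝ) := ⋃ m ∈ GammaIdx d S w, box d m δ

/-- The contour integral `(2πi)^{-(d+2)} ∫_{N × C} G/H · dz dt/(z_1⋯z_{d+1}t)^{n+1}`,
parametrized by angles, where `C` is the circle `|t| = r`. -/
def fullIntegral (n : ℕ) (ε δ r : ℝ) : ℂ :=
  (((2 * π) ^ (d + 2) : ℝ))⁻¹ •
    ∫ θ in Nparam d S w δ,
      ∫ φ in Set.Ioo 0 (2 * π),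
        GC d S w (zOf d ε θ) ((r : ℂ) * Complex.exp (Complex.I * φ)) /
            HC d S w (zOf d ε θ) ((r : ℂ) * Complex.exp (Complex.I * φ)) *
          (((∏ j, zOf d ε θ j) * ((r : ℂ) * Complex.exp (Complex.I * φ))) ^ n)⁻¹

/-- The residue integrand
`[(1+z_1)⋯(1+z_d)/(B(ẑ) z_1⋯z_{d+1})]·[(B(ẑ) - z_{d+1}^2 A(ẑ))/(1-z_{d+1})]·S̄(z)^n`,
parametrized by angles, including the Jacobian factors `i z_j` of `dz_j`. -/
def resIntegrand (n : ℕ) (ε : ℝ) (θ : Fin (d + 1) → ℝ) : ℂ :=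
  ((∏ j : Fin d, (1 + zOf d ε θ (Fin.castSucc j))) /
      (BC d S w (zOf d ε θ) * ∏ j, zOf d ε θ j)) *
    ((BC d S w (zOf d ε θ) - zOf d ε θ (Fin.last d) ^ 2 * AC d S w (zOf d ε θ)) /
      (1 - zOf d ε θ (Fin.last d))) *
    SbarC d S w (zOf d ε θ) ^ n *
    ∏ j, Complex.I * zOf d ε θ j

/-- The contour integral `∫_{N_w} (residue integrand) dz` over the product of arcs `N_w`,
`w = wOf m`, parametrized by angles. -/
def resIntegral (n : ℕ) (ε δ : ℝ) (m : Fin (d + 1) → Fin 4) : ℂ :=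
  ∫ θ in box d m δ, resIntegrand d S w n ε θ

end ZeroDrift

/-!
On the torus `S̄` becomes, after reflecting the last angle, the exponential sum `∑ w_i e^{i⟨i, θ⟩}`,
that is, `S(1)` times the characteristic function of a random step. Its phase is therefore a second
cumulant expansion: the linear terms cancel because the drift vanishes, the mixed quadratic terms
cancel because reflecting one symmetric coordinate changes their sign, and for unit steps without
drift the second moment in coordinate `j` is `2 b_j`. The quadratic error of `log` at `S(1)` is
harmless, since it is of order four in `θ`.
-/

section LogExpSum

open Asymptotics Complex Topology

lemma exists_forall_abs_lt_norm_le_of_isBigO {ι E : Type*} [Finite ι] [SeminormedAddCommGroup E]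
    {f : (ι → ℝ) → E} {g : (ι → ℝ) → ℝ} (h : f =O[𝓝 0] g) (hg : ∀ θ, 0 ≤ g θ) :
    ∃ C r : ℝ, 0 < C ∧ 0 < r ∧ ∀ θ : ι → ℝ, (∀ j, |θ j| < r) → ‖f θ‖ ≤ C * g θ := by
  cases nonempty_fintype ι
  obtain ⟨C, hC, hfg⟩ := h.exists_pos
  obtain ⟨r, hr, hball⟩ := Metric.eventually_nhds_iff.1 hfg.bound
  refine ⟨C, r, hC, hr, fun θ hθ => ?_⟩
  rw [← Real.norm_of_nonneg (hg θ)]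
  exact hball ((dist_pi_lt_iff hr).2 fun j => by simpa [Real.dist_eq] using hθ j)

lemma isBigO_exp_I_mul_ofReal_sub :
    (fun x : ℝ => exp (I * x) - (1 + I * x - (x : ℂ) ^ 2 / 2)) =O[𝓝 0] fun x => x ^ 3 := by
  have hI : Tendsto (fun x : ℝ => I * (x : ℂ)) (𝓝 0) (𝓝 0) :=
    Continuous.tendsto' (by fun_prop) _ _ (by simp)
  have hexp := (exp_sub_sum_range_isBigO_pow 3).comp_tendsto hI
  refine (hexp.congr_left fun x => ?_).trans (isBigO_of_le _ fun x => by simp)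
  simp only [Function.comp_apply, Finset.sum_range_succ, Finset.sum_range_zero, Nat.factorial,
    mul_pow, I_sq]
  push_cast
  ring

lemma isBigO_log_sub_log_sub_div {a : ℂ} (ha : a ∈ slitPlane) :
    (fun z => log z - (log a + (z - a) / a)) =O[𝓝 a] fun z => (z - a) ^ 2 := by
  obtain ⟨p, hp⟩ := analyticAt_clog ha
  have hderiv : p.coeff 1 = a⁻¹ := hp.hasDerivAt.unique (hasDerivAt_log ha)
  have hcoeff : p.coeff 0 = log a := hp.coeff_zero _
  have hsub : Tendsto (fun z => z - a) (𝓝 a) (𝓝 0) :=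
    Continuous.tendsto' (by fun_prop) _ _ (sub_self a)
  have htaylor := (hp.isBigO_sub_partialSum_pow 2).comp_tendsto hsub
  refine (htaylor.congr_left fun z => ?_).trans (isBigO_of_le _ fun z => by simp)
  simp [FormalMultilinearSeries.partialSum, Finset.sum_range_succ, hderiv, hcoeff,
    div_eq_mul_inv]

variable {α ι : Type*} {l : Filter α} {g : α → ℝ}

lemma isBigO_log_sub_of_isBigO_sub {a : ℂ} {f p : α → ℂ} (ha : a ∈ slitPlane)
    (hg : Tendsto g l (𝓝 0)) (hf : (fun t => f t - (a + p t)) =O[l] fun t => g t ^ 3)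
    (hp : p =O[l] fun t => g t ^ 2) :
    (fun t => log (f t) - (log a + p t / a)) =O[l] fun t => g t ^ 3 := by
  have hpow {m n : ℕ} (hmn : m < n) : (fun t => g t ^ n) =O[l] fun t => g t ^ m :=
    ((isLittleO_pow_pow hmn).comp_tendsto hg).isBigO
  have hfa : (fun t => f t - a) =O[l] fun t => g t ^ 2 :=
    ((hf.trans (hpow (by norm_num))).add hp).congr_left fun t => by ring
  have hlim : Tendsto f l (𝓝 a) :=
    tendsto_sub_nhds_zero_iff.1 (hfa.trans_tendsto (by simpa using hg.pow 2))
  have hlog : (fun t => log (f t) - (log a + (f t - a) / a)) =O[l] fun t => g t ^ 3 :=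
    ((isBigO_log_sub_log_sub_div ha).comp_tendsto hlim).trans <|
      (hfa.pow 2).trans <| by simpa only [← pow_mul] using hpow (show 3 < 2 * 2 by norm_num)
  refine (hlog.add (hf.const_mul_left a⁻¹)).congr_left fun t => ?_
  ring

variable {s : Finset ι} {w : ι → ℝ} {x : ι → α → ℝ}

lemma isBigO_sum_mul_exp_sub (hg : Tendsto g l (𝓝 0)) (hx : ∀ i ∈ s, x i =O[l] g) :
    (fun t => ∑ i ∈ s, (w i : ℂ) * exp (I * x i t) -
        ∑ i ∈ s, (w i : ℂ) * (1 + I * x i t - (x i t : ℂ) ^ 2 / 2)) =O[l] fun t => g t ^ 3 := by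
  simp only [← Finset.sum_sub_distrib, ← mul_sub]
  refine IsBigO.fun_sum fun i hi => IsBigO.const_mul_left ?_ _
  exact (isBigO_exp_I_mul_ofReal_sub.comp_tendsto ((hx i hi).trans_tendsto hg)).trans
    ((hx i hi).pow 3)

lemma isBigO_log_sum_mul_exp_sub (hg : Tendsto g l (𝓝 0)) (hx : ∀ i ∈ s, x i =O[l] g)
    (hpos : 0 < ∑ i ∈ s, w i) (hmean : ∀ t, ∑ i ∈ s, w i * x i t = 0) :
    (fun t => log (∑ i ∈ s, (w i : ℂ) * exp (I * x i t)) -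
        (Real.log (∑ i ∈ s, w i) -
          (((∑ i ∈ s, w i * x i t ^ 2) / (2 * ∑ i ∈ s, w i) : ℝ) : ℂ)))
      =O[l] fun t => g t ^ 3 := by
  have htaylor (t : α) : ∑ i ∈ s, (w i : ℂ) * (1 + I * x i t - (x i t : ℂ) ^ 2 / 2) =
      ((∑ i ∈ s, w i : ℝ) : ℂ) + ((-(∑ i ∈ s, w i * x i t ^ 2) / 2 : ℝ) : ℂ) := by
    have hmean_complex : ∑ i ∈ s, (w i : ℂ) * x i t = 0 := mod_cast hmean t
    simp only [mul_sub, mul_add, mul_one, mul_left_comm _ I, mul_div_assoc',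
      Finset.sum_sub_distrib, Finset.sum_add_distrib, ← Finset.mul_sum, ← Finset.sum_div,
      hmean_complex]
    push_cast
    ring
  have hsq : (fun t => ((-(∑ i ∈ s, w i * x i t ^ 2) / 2 : ℝ) : ℂ)) =O[l] fun t => g t ^ 2 := by
    have hsum : (fun t => ∑ i ∈ s, w i * x i t ^ 2) =O[l] fun t => g t ^ 2 :=
      IsBigO.fun_sum fun i hi => ((hx i hi).pow 2).const_mul_left _
    refine isBigO_ofReal_left.2 <| (hsum.const_mul_left (-1 / 2)).congr_left fun t => ?_
    ring
  have hexp := isBigO_sum_mul_exp_sub (w := w) hg hx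
  simp only [htaylor] at hexp
  refine (isBigO_log_sub_of_isBigO_sub (ofReal_mem_slitPlane.2 hpos) hg hexp hsq).congr_left
    fun t => ?_
  rw [ofReal_log hpos.le]
  push_cast
  ring

end LogExpSum

namespace ZeroDrift

section Moments

variable {ι : Type*} (S : Finset (ι → ℤ)) (w : (ι → ℤ) → ℝ)

/-- The (unnormalised) drift of the weighted step set in coordinate `j`: the first-order coefficient
of the phase. Dividing by `S(1)` gives the mean of a random step. -/
def drift (j : ι) : ℝ := ∑ i ∈ S, w i * i j

/-- The (unnormalised) mixed second moment of coordinates `j` and `k` of the weighted step set;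
for a zero-drift step set this is `S(1)` times the covariance of a random step, which governs the
quadratic term of the phase. -/
def secondMoment (j k : ι) : ℝ := ∑ i ∈ S, w i * (i j * i k)

variable {S w}

lemma secondMoment_comm (j k : ι) : secondMoment S w j k = secondMoment S w k j := by
  simp only [secondMoment, mul_comm]

variable [Fintype ι]

lemma sum_mul_linearForm (θ : ι → ℝ) :
    ∑ i ∈ S, w i * ∑ j, i j * θ j = ∑ j, drift S w j * θ j := by
  simp only [drift, Finset.mul_sum, Finset.sum_mul, mul_assoc]
  exact Finset.sum_comm

lemma sum_mul_linearForm_sq (θ : ι → ℝ) :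
    ∑ i ∈ S, w i * (∑ j, i j * θ j) ^ 2 = ∑ j, ∑ k, secondMoment S w j k * (θ j * θ k) := by
  simp only [sq, secondMoment, Finset.mul_sum, Finset.sum_mul]
  rw [Finset.sum_comm]
  refine Finset.sum_congr rfl fun j _ => ?_
  rw [Finset.sum_comm]
  exact Finset.sum_congr rfl fun k _ => Finset.sum_congr rfl fun i _ => by ring

lemma sum_mul_linearForm_sq_of_pairwise (hcov : Pairwise fun j k => secondMoment S w j k = 0)
    (θ : ι → ℝ) :
    ∑ i ∈ S, w i * (∑ j, i j * θ j) ^ 2 = ∑ j, secondMoment S w j j * θ j ^ 2 := by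
  rw [sum_mul_linearForm_sq]
  refine Finset.sum_congr rfl fun j _ => ?_
  rw [Finset.sum_eq_single_of_mem j (Finset.mem_univ j)
    fun k _ hkj => by rw [hcov hkj.symm, zero_mul], sq]

end Moments

section UnitSteps

variable {ι : Type*} {S : Finset (ι → ℤ)} {w : (ι → ℤ) → ℝ} {j : ι}

lemma drift_eq_sub (hstep : ∀ i ∈ S, i j = -1 ∨ i j = 0 ∨ i j = 1) :
    drift S w j = ∑ i ∈ S with i j = 1, w i - ∑ i ∈ S with i j = -1, w i := by
  rw [drift, Finset.sum_filter, Finset.sum_filter, ← Finset.sum_sub_distrib]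
  refine Finset.sum_congr rfl fun i hi => ?_
  rcases hstep i hi with h | h | h <;> simp [h]

lemma secondMoment_self_eq_add (hstep : ∀ i ∈ S, i j = -1 ∨ i j = 0 ∨ i j = 1) :
    secondMoment S w j j = ∑ i ∈ S with i j = 1, w i + ∑ i ∈ S with i j = -1, w i := by
  rw [secondMoment, Finset.sum_filter, Finset.sum_filter, ← Finset.sum_add_distrib]
  refine Finset.sum_congr rfl fun i hi => ?_
  rcases hstep i hi with h | h | h <;> simp [h]

lemma sum_filter_eq_one_of_drift_eq_zero (hstep : ∀ i ∈ S, i j = -1 ∨ i j = 0 ∨ i j = 1)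
    (hdrift : drift S w j = 0) :
    ∑ i ∈ S with i j = 1, w i = secondMoment S w j j / 2 := by
  rw [drift_eq_sub hstep] at hdrift
  linarith [secondMoment_self_eq_add (w := w) hstep]

end UnitSteps

section Symmetry

variable {n : ℕ} {S : Finset (Fin n → ℤ)} {w : (Fin n → ℤ) → ℝ} {k : Fin n}

lemma sum_mul_eq_zero_of_symmetricAxis (hsym : SymmetricAxis n S w k) {f : (Fin n → ℤ) → ℝ}
    (hodd : ∀ i, f (Function.update i k (-i k)) = -f i) :
    ∑ i ∈ S, w i * f i = 0 := by
  have hreflect : ∑ i ∈ S, w i * f i = ∑ i ∈ S, -(w i * f i) := by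
    refine Finset.sum_nbij' (fun i => Function.update i k (-i k))
      (fun i => Function.update i k (-i k)) (fun i hi => (hsym i hi).1)
      (fun i hi => (hsym i hi).1) (by simp) (by simp) fun i hi => ?_
    rw [(hsym i hi).2, hodd, mul_neg, neg_neg]
  rw [Finset.sum_neg_distrib] at hreflect
  exact self_eq_neg.1 hreflect

lemma drift_eq_zero_of_symmetricAxis (hsym : SymmetricAxis n S w k) : drift S w k = 0 :=
  sum_mul_eq_zero_of_symmetricAxis hsym (by simp)

lemma secondMoment_eq_zero_of_symmetricAxis (hsym : SymmetricAxis n S w k) {j : Fin n}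
    (hkj : k ≠ j) : secondMoment S w k j = 0 :=
  sum_mul_eq_zero_of_symmetricAxis hsym (by simp [Function.update_of_ne hkj.symm])

end Symmetry

section MostlySymmetric

variable {d : ℕ} {S : Finset (Fin (d + 1) → ℤ)} {w : (Fin (d + 1) → ℤ) → ℝ}

lemma drift_eq_zero_of_forall_symmetricAxis
    (hsym : ∀ k : Fin d, SymmetricAxis (d + 1) S w k.castSucc)
    (hlast : drift S w (Fin.last d) = 0) (j : Fin (d + 1)) : drift S w j = 0 :=
  Fin.lastCases hlast (fun k => drift_eq_zero_of_symmetricAxis (hsym k)) j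

lemma pairwise_secondMoment_of_forall_symmetricAxis
    (hsym : ∀ k : Fin d, SymmetricAxis (d + 1) S w k.castSucc) :
    Pairwise fun j k => secondMoment S w j k = 0 := by
  intro j k hjk
  rcases j.eq_castSucc_or_eq_last with ⟨j, rfl⟩ | rfl
  · exact secondMoment_eq_zero_of_symmetricAxis (hsym j) hjk
  · obtain ⟨k, rfl⟩ := Fin.exists_castSucc_eq.2 hjk.symm
    rw [secondMoment_comm]
    exact secondMoment_eq_zero_of_symmetricAxis (hsym k) hjk.symm

end MostlySymmetric

section Torus

open Asymptotics Topology

variable {d : ℕ} {S : Finset (Fin (d + 1) → ℤ)} {w : (Fin (d + 1) → ℤ) → ℝ}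

lemma SC_exp (θ : Fin (d + 1) → ℝ) :
    SC d S w (fun j => Complex.exp (Complex.I * θ j)) =
      ∑ i ∈ S, (w i : ℂ) * Complex.exp (Complex.I * (∑ j, i j * θ j : ℝ)) := by
  refine Finset.sum_congr rfl fun i _ => ?_
  simp only [← Complex.exp_int_mul, ← Complex.exp_sum]
  push_cast
  simp only [Finset.mul_sum, mul_left_comm]

lemma SbarC_eq_SC_update (z : Fin (d + 1) → ℂ) :
    SbarC d S w z = SC d S w (Function.update z (Fin.last d) (z (Fin.last d))⁻¹) := by
  refine Finset.sum_congr rfl fun i _ => ?_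
  simp [Fin.prod_univ_castSucc, Function.update_of_ne, Fin.castSucc_ne_last, mul_assoc]

lemma SbarC_exp (θ : Fin (d + 1) → ℝ) :
    SbarC d S w (fun j => Complex.exp (Complex.I * θ j)) =
      SC d S w fun j =>
        Complex.exp (Complex.I * (Function.update θ (Fin.last d) (-θ (Fin.last d)) j : ℝ)) := by
  rw [SbarC_eq_SC_update]
  congr 1
  ext j
  rcases eq_or_ne j (Fin.last d) with rfl | hj
  · simp [Complex.exp_neg]
  · simp [hj]

lemma isBigO_log_SC_exp_sub (hpos : 0 < S1 d S w) (hdrift : ∀ j, drift S w j = 0)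
    (hcov : Pairwise fun j k => secondMoment S w j k = 0) :
    (fun θ : Fin (d + 1) → ℝ =>
        Complex.log (SC d S w fun j => Complex.exp (Complex.I * θ j)) -
          ((Real.log (S1 d S w) : ℂ) -
            ∑ j, ((secondMoment S w j j / 2 / S1 d S w : ℝ) : ℂ) * (θ j : ℂ) ^ 2))
      =O[𝓝 0] fun θ => (∑ j, |θ j|) ^ 3 := by
  have hnorm : Tendsto (fun θ : Fin (d + 1) → ℝ => ∑ j, |θ j|) (𝓝 0) (𝓝 0) :=
    Continuous.tendsto' (by fun_prop) _ _ (by simp)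
  have hform (i : Fin (d + 1) → ℤ) :
      (fun θ : Fin (d + 1) → ℝ => ∑ j, i j * θ j) =O[𝓝 0] fun θ => ∑ j, |θ j| := by
    refine IsBigO.fun_sum fun j _ => IsBigO.const_mul_left (isBigO_of_le _ fun θ => ?_) _
    rw [Real.norm_eq_abs]
    exact (Finset.single_le_sum (fun k _ => abs_nonneg (θ k)) (Finset.mem_univ j)).trans
      (le_abs_self _)
  have hmean (θ : Fin (d + 1) → ℝ) : ∑ i ∈ S, w i * ∑ j, i j * θ j = 0 := by
    simp [sum_mul_linearForm, hdrift]
  refine (isBigO_log_sum_mul_exp_sub hnorm (fun i _ => hform i) hpos hmean).congr_left fun θ => ?_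
  have hvar : (∑ i ∈ S, w i * (∑ j, i j * θ j) ^ 2) / (2 * ∑ i ∈ S, w i) =
      ∑ j, secondMoment S w j j / 2 / S1 d S w * θ j ^ 2 := by
    rw [sum_mul_linearForm_sq_of_pairwise hcov, Finset.sum_div]
    exact Finset.sum_congr rfl fun j _ => by rw [S1]; ring
  rw [SC_exp, hvar]
  push_cast
  rfl

end Torus

end ZeroDrift

open Asymptotics Topology ZeroDrift in
theorem phase_expansion_general
    (d : ℕ) (S : Finset (Fin (d + 1) → ℤ)) (w : (Fin (d + 1) → ℤ) → ℝ)
    (hpos : 0 < S1 d S w) (hdrift : ∀ j, drift S w j = 0)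
    (hcov : Pairwise fun j k => secondMoment S w j k = 0) :
    (fun θ : Fin (d + 1) → ℝ =>
        Complex.log (SbarC d S w fun j => Complex.exp (Complex.I * θ j)) -
          ((Real.log (S1 d S w) : ℂ) -
            ∑ j, ((secondMoment S w j j / 2 / S1 d S w : ℝ) : ℂ) * (θ j : ℂ) ^ 2))
      =O[𝓝 0] fun θ => (∑ j, |θ j|) ^ 3 := by
  have hreflect : Tendsto (fun θ : Fin (d + 1) → ℝ =>
      Function.update θ (Fin.last d) (-θ (Fin.last d))) (𝓝 0) (𝓝 0) :=
    Continuous.tendsto' (by fun_prop) _ _ (by ext j; simp [Function.update_apply])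
  have habs (θ : Fin (d + 1) → ℝ) (j : Fin (d + 1)) :
      |Function.update θ (Fin.last d) (-θ (Fin.last d)) j| = |θ j| := by
    rcases eq_or_ne j (Fin.last d) with rfl | hj <;> simp [*]
  have hsq (θ : Fin (d + 1) → ℝ) (j : Fin (d + 1)) :
      (Function.update θ (Fin.last d) (-θ (Fin.last d)) j : ℂ) ^ 2 = (θ j : ℂ) ^ 2 :=
    mod_cast sq_eq_sq_iff_abs_eq_abs _ _ |>.2 (habs θ j)
  simpa only [Function.comp_def, ← SbarC_exp, hsq, habs] using
    (isBigO_log_SC_exp_sub hpos hdrift hcov).comp_tendsto hreflect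

/-- Taylor expansion of the phase: as `θ → 0`,
`log S̄(e^{iθ}) = log S(1) - Σ_j (b_j/S(1)) θ_j² + O((|θ_1|+⋯+|θ_{d+1}|)³)`. -/
theorem phase_expansion
    (d : ℕ) (S : Finset (Fin (d + 1) → ℤ)) (w : (Fin (d + 1) → ℤ) → ℝ)
    (hstep : ∀ i ∈ S, (∀ j, i j = -1 ∨ i j = 0 ∨ i j = 1) ∧ i ≠ 0)
    (hw : ∀ i ∈ S, 0 < w i)
    (hsym : ∀ k : Fin d, SymmetricAxis (d + 1) S w (Fin.castSucc k))
    (hfwd : ∀ k : Fin (d + 1), ∃ i ∈ S, i k = 1)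
    (hbwd : ∀ k : Fin (d + 1), ∃ i ∈ S, i k = -1)
    (hzero : (∑ i ∈ S.filter fun i => i (Fin.last d) = -1, w i)
        = ∑ i ∈ S.filter fun i => i (Fin.last d) = 1, w i)
    :
    ∃ C r : ℝ, 0 < C ∧ 0 < r ∧
      ∀ θ : Fin (d + 1) → ℝ, (∀ j, |θ j| < r) →
        ‖Complex.log (ZeroDrift.SbarC d S w (fun j => Complex.exp (Complex.I * θ j))) -
            ((Real.log (ZeroDrift.S1 d S w) : ℂ) -
              ∑ j : Fin (d + 1),
                (((∑ i ∈ S.filter fun i => i j = 1, w i) / ZeroDrift.S1 d S w : ℝ) : ℂ) *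
                  (θ j : ℂ) ^ 2)‖
          ≤ C * (∑ j : Fin (d + 1), |θ j|) ^ 3 := by
  have hunit (j : Fin (d + 1)) : ∀ i ∈ S, i j = -1 ∨ i j = 0 ∨ i j = 1 :=
    fun i hi => (hstep i hi).1 j
  have hpos : 0 < ZeroDrift.S1 d S w := Finset.sum_pos hw ((hfwd 0).imp fun _ h => h.1)
  have hdrift : ∀ j, ZeroDrift.drift S w j = 0 :=
    ZeroDrift.drift_eq_zero_of_forall_symmetricAxis hsym <| by
      rw [ZeroDrift.drift_eq_sub (hunit _), hzero, sub_self]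
  have hcov := ZeroDrift.pairwise_secondMoment_of_forall_symmetricAxis hsym
  simp only [fun j => ZeroDrift.sum_filter_eq_one_of_drift_eq_zero (hunit j) (hdrift j)]
  exact exists_forall_abs_lt_norm_le_of_isBigO (phase_expansion_general d S w hpos hdrift hcov)
    fun θ => by positivity

end
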